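/- A dynamical system (X,T) on a compact metric space is saturated if and only if the variational principle holds for all real Banach spaces: for every real Banach space B, every map Φ : X → B* continuous for the weak-star topology, every α ∈ B* and every E ⊆ B with M_Φ(α;E) ≠ ∅, one has h_top(X_Φ(α;E)) = sup{ h_μ : μ ∈ M_Φ(α;E) }. -/

import Mathlib

open MeasureTheory Filter Topology Set
open scoped ENNReal NNReal

/-!  General definitions: Bowen topological entropy (via covers by Bowen balls),
measure-theoretic (Kolmogorov–Sinai) entropy, generic points, saturated systems,
and the specification property. -/

variable {X : Type*}

/-- The Bowen ball of center `x`, order `n`, radius `ε` (for the metric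
`d_n(x,y) = max_{0 ≤ j < n} d(T^j x, T^j y)`). -/
def bowenBall [PseudoMetricSpace X] (T : X → X) (x : X) (n : ℕ) (ε : ℝ) : Set X :=
  {y | ∀ j < n, dist (T^[j] x) (T^[j] y) < ε}

/-- `H_n^s(Z,ε)`: infimum of `Σ_i exp(-s n_i)` over countable covers of `Z` by Bowen balls
`B_{n_i}(x_i,ε)` with all `n_i ≥ n`. -/
noncomputable def bowenH [PseudoMetricSpace X] (T : X → X) (Z : Set X) (s ε : ℝ) (n : ℕ) :
    ℝ≥0∞ :=
  ⨅ (C : Set (X × ℕ)) (_ : C.Countable) (_ : ∀ p ∈ C, n ≤ p.2)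
    (_ : Z ⊆ ⋃ p ∈ C, bowenBall T p.1 p.2 ε),
    ∑' p : C, ENNReal.ofReal (Real.exp (-s * ((p : X × ℕ).2 : ℝ)))

/-- `h_top(Z,ε)`: the critical exponent of `s ↦ H^s(Z,ε) = sup_n H_n^s(Z,ε)`. -/
noncomputable def bowenEntropyRes [PseudoMetricSpace X] (T : X → X) (Z : Set X) (ε : ℝ) :
    ℝ≥0∞ :=
  sInf ((fun s : ℝ≥0 => (s : ℝ≥0∞)) '' {s : ℝ≥0 | (⨆ n, bowenH T Z (s : ℝ) ε n) = 0})

/-- Bowen topological entropy of a subset `Z`: `h_top(Z) = lim_{ε → 0} h_top(Z,ε)`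
(the limit being a supremum by monotonicity in `ε`). -/
noncomputable def bowenEntropy [PseudoMetricSpace X] (T : X → X) (Z : Set X) : ℝ≥0∞ :=
  ⨆ (ε : ℝ) (_ : 0 < ε), bowenEntropyRes T Z ε

/-- Entropy of the partition `P ∨ T⁻¹P ∨ ⋯ ∨ T⁻⁽ⁿ⁻¹⁾P`, where a countable partition is
encoded as a function `P : X → ℕ`: it is the Shannon entropy of the map
`x ↦ (P x, P (T x), …, P (Tⁿ⁻¹ x))`. -/
noncomputable def partInfo [MeasurableSpace X] (T : X → X) (μ : Measure X) (P : X → ℕ)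
    (n : ℕ) : ℝ≥0∞ :=
  ∑' l : List ℕ, ENNReal.ofReal (Real.negMulLog
    ((μ ((fun x => (List.range n).map fun j => P (T^[j] x)) ⁻¹' {l})).toReal))

/-- Measure-theoretic (Kolmogorov–Sinai) entropy `h_μ(T)`: supremum over finite measurable
partitions `P` of `lim_n (1/n) H_μ(P ∨ T⁻¹P ∨ ⋯ ∨ T⁻⁽ⁿ⁻¹⁾P)` (the limit exists by
subadditivity, so it may be written as a `liminf`). -/
noncomputable def ksEntropy [MeasurableSpace X] (T : X → X) (μ : Measure X) : ℝ≥0∞ :=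
  ⨆ (P : X → ℕ) (_ : Measurable P) (_ : (Set.range P).Finite),
    Filter.atTop.liminf fun n : ℕ => partInfo T μ P n / (n : ℝ≥0∞)

/-- `x` is a generic point for `μ` : the empirical measures `(1/n) Σ_{j<n} δ_{T^j x}`
converge to `μ` in the weak-star topology, i.e. Birkhoff averages of every continuous
function converge to its integral. -/
def IsGeneric [TopologicalSpace X] [MeasurableSpace X] (T : X → X) (μ : Measure X)
    (x : X) : Prop :=
  ∀ f : C(X, ℝ), Tendsto (fun n : ℕ => (∑ j ∈ Finset.range n, f (T^[j] x)) / (n : ℝ))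
    atTop (𝓝 (∫ y, f y ∂μ))

/-- `μ ∈ V(x)` : `μ` is a weak-star limit point of the empirical measures of `x`. -/
def IsLimitMeasure [TopologicalSpace X] [MeasurableSpace X] (T : X → X) (x : X)
    (μ : Measure X) : Prop :=
  ∃ φ : ℕ → ℕ, StrictMono φ ∧ ∀ f : C(X, ℝ),
    Tendsto (fun m : ℕ => (∑ j ∈ Finset.range (φ m), f (T^[j] x)) / (φ m : ℝ))
      atTop (𝓝 (∫ y, f y ∂μ))

/-- A system is saturated if `h_top(G_μ) = h_μ` for every invariant Borel probability
measure `μ`. -/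
def Saturated [PseudoMetricSpace X] [MeasurableSpace X] (T : X → X) : Prop :=
  ∀ μ : Measure X, IsProbabilityMeasure μ → MeasurePreserving T μ μ →
    bowenEntropy T {x | IsGeneric T μ x} = ksEntropy T μ

/-- The specification property. -/
def SpecificationProperty [PseudoMetricSpace X] (T : X → X) : Prop :=
  ∀ ε : ℝ, 0 < ε → ∃ m : ℕ, 1 ≤ m ∧
    ∀ k : ℕ, 2 ≤ k → ∀ x : ℕ → X, ∀ a b : ℕ → ℕ,
      (∀ i < k, a i ≤ b i) →
      (∀ i, i + 1 < k → b i + m ≤ a (i + 1)) →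
      ∃ y : X, ∀ i < k, ∀ n ≤ b i - a i,
        dist (T^[a i + n] y) (T^[n] (x i)) < ε

/-!
Every point `x` has a weak-star limit measure `μ`; it is invariant, and if `x ∈ X_Φ(α;E)` then
`μ ∈ M_Φ(α;E)`. So `h_top(X_Φ(α;E)) ≤ sup h_μ` follows from Bowen's theorem: the points having a
limit measure of entropy at most `t` form a set of topological entropy at most `t`. For `τ > t`,
a Shannon code for the words of length `k` of a fine partition has mean length below `k τ` for such
a measure. A continuous function bounding the code lengths then has small averages along infinitely
many segments of the orbit of `x`. These segments have short codes, and Kraft's inequality bounds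
the number of short codes, hence of the Bowen balls needed. The reverse inequality holds in
saturated systems because `G_μ ⊆ X_Φ(α;E)` for `μ ∈ M_Φ(α;E)`.

Conversely, take `B = C(X)`, `Φ x = δ_x`, `α = ∫ · dμ` and `E = B`. Since `E = -E`, the
inequalities are equalities, so that `M_Φ(α;E) = {μ}` and `X_Φ(α;E) = G_μ`.
-/

section CoverEstimates

variable [PseudoMetricSpace X] {T : X → X} {s ε : ℝ} {n : ℕ}

lemma bowenH_mono {Z Z' : Set X} (h : Z ⊆ Z') : bowenH T Z s ε n ≤ bowenH T Z' s ε n :=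
  iInf_mono fun _ => iInf_mono fun _ => iInf_mono fun _ => le_iInf fun hZ' =>
    iInf_le _ (h.trans hZ')

lemma bowenEntropy_mono {Z Z' : Set X} (h : Z ⊆ Z') : bowenEntropy T Z ≤ bowenEntropy T Z' := by
  refine iSup₂_mono fun ε _ => sInf_le_sInf (image_mono fun s hs => ?_)
  exact le_antisymm ((iSup_mono fun n => bowenH_mono h).trans_eq hs) bot_le

lemma bowenEntropy_le_of_bowenH_eq_zero {Z : Set X} {t : ℝ≥0}
    (h : ∀ ε : ℝ, 0 < ε → ∀ s : ℝ≥0, t < s → ∀ n, bowenH T Z s ε n = 0) :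
    bowenEntropy T Z ≤ t := by
  refine iSup₂_le fun ε hε => le_of_forall_gt_imp_ge_of_dense fun a ha => ?_
  obtain ⟨s, hts, hsa⟩ := ENNReal.lt_iff_exists_nnreal_btwn.1 ha
  refine le_trans (sInf_le ⟨s, ?_, rfl⟩) hsa.le
  simpa using h ε hε s (by exact_mod_cast hts)

lemma bowenH_le_tsum {ι : Type*} [Countable ι] {Z : Set X} (V : ι → Set X) (ν : ι → ℕ)
    (hν : ∀ i, n ≤ ν i) (hZ : Z ⊆ ⋃ i, V i)
    (hV : ∀ i, ∀ z ∈ V i, V i ⊆ bowenBall T z (ν i) ε) :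
    bowenH T Z s ε n ≤ ∑' i, ENNReal.ofReal (Real.exp (-s * (ν i : ℝ))) := by
  -- Empty members of the cover have no center and are discarded.
  let J := {i : ι // (V i).Nonempty}
  let g : J → X × ℕ := fun i => (i.2.some, ν i.1)
  calc bowenH T Z s ε n
      ≤ ∑' p : range g, ENNReal.ofReal (Real.exp (-s * ((p : X × ℕ).2 : ℝ))) := by
        refine iInf_le_of_le (range g) <| iInf_le_of_le (countable_range g) <|
          iInf_le_of_le ?_ <| iInf_le _ ?_
        · rintro _ ⟨i, rfl⟩
          exact hν i.1
        · intro z hz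
          obtain ⟨i, hi⟩ := mem_iUnion.1 (hZ hz)
          have hne : (V i).Nonempty := ⟨z, hi⟩
          exact mem_biUnion (mem_range_self (⟨i, hne⟩ : J)) (hV i _ hne.some_mem hi)
    _ ≤ ∑' i : J, ENNReal.ofReal (Real.exp (-s * (ν i.1 : ℝ))) :=
        ENNReal.tsum_le_tsum_comp_of_surjective rangeFactorization_surjective
          (fun p : range g => ENNReal.ofReal (Real.exp (-s * ((p : X × ℕ).2 : ℝ))))
    _ ≤ ∑' i, ENNReal.ofReal (Real.exp (-s * (ν i : ℝ))) :=
        ENNReal.tsum_comp_le_tsum_of_injective Subtype.val_injective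
          (fun i : ι => ENNReal.ofReal (Real.exp (-s * (ν i : ℝ))))

lemma bowenH_iUnion_eq_zero {κ : Type*} [Countable κ] {Z : κ → Set X}
    (h : ∀ i, bowenH T (Z i) s ε n = 0) : bowenH T (⋃ i, Z i) s ε n = 0 := by
  refine le_antisymm (le_of_forall_gt_imp_ge_of_dense fun η hη => ?_) bot_le
  obtain ⟨δ, hδ, hsum⟩ := ENNReal.exists_pos_sum_of_countable' hη.ne' κ
  have hlt : ∀ i, bowenH T (Z i) s ε n < δ i := fun i => (h i).trans_lt (hδ i)
  simp only [bowenH, iInf_lt_iff] at hlt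
  choose C hC hn hZ hlt using hlt
  calc bowenH T (⋃ i, Z i) s ε n
      ≤ ∑' p : ⋃ i, C i, ENNReal.ofReal (Real.exp (-s * ((p : X × ℕ).2 : ℝ))) := by
        refine iInf_le_of_le (⋃ i, C i) <| iInf_le_of_le (countable_iUnion hC) <|
          iInf_le_of_le ?_ <| iInf_le _ ?_
        · intro p hp
          obtain ⟨i, hi⟩ := mem_iUnion.1 hp
          exact hn i p hi
        · refine iUnion_subset fun i => (hZ i).trans ?_
          exact biUnion_subset_biUnion_left (subset_iUnion C i)
    _ ≤ ∑' i, ∑' p : C i, ENNReal.ofReal (Real.exp (-s * ((p : X × ℕ).2 : ℝ))) :=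
        ENNReal.tsum_iUnion_le_tsum
          (fun p : X × ℕ => ENNReal.ofReal (Real.exp (-s * (p.2 : ℝ)))) C
    _ ≤ ∑' i, δ i := ENNReal.tsum_le_tsum fun i => (hlt i).le
    _ ≤ η := hsum.le

lemma bowenH_setOf_frequently_eq_zero {ι : ℕ → Type*} [∀ m, Countable (ι m)] {Z : ℕ → Set X}
    (V : ∀ m, ι m → Set X) {ν : ℕ → ℕ} (hν : Tendsto ν atTop atTop)
    (hZ : ∀ m, Z m ⊆ ⋃ i, V m i) (hV : ∀ m i, ∀ z ∈ V m i, V m i ⊆ bowenBall T z (ν m) ε)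
    (hsum : ∑' m, ∑' _ : ι m, ENNReal.ofReal (Real.exp (-s * (ν m : ℝ))) ≠ ∞) :
    bowenH T {x | ∃ᶠ m in atTop, x ∈ Z m} s ε n = 0 := by
  have htail : ∀ᶠ m₀ in atTop, bowenH T {x | ∃ᶠ m in atTop, x ∈ Z m} s ε n ≤
      ∑' m, ∑' _ : ι (m + m₀), ENNReal.ofReal (Real.exp (-s * (ν (m + m₀) : ℝ))) := by
    filter_upwards [eventually_forall_ge_atTop.2 (hν.eventually_ge_atTop n)] with m₀ hm₀
    refine (bowenH_le_tsum (fun a : Σ m, ι (m + m₀) => V _ a.2) _ (fun a => hm₀ _ le_add_self)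
      (fun x hx => ?_) fun a => hV _ a.2).trans_eq (ENNReal.tsum_sigma' _)
    obtain ⟨m, hm, hxm⟩ := frequently_atTop.1 hx m₀
    obtain ⟨m, rfl⟩ := Nat.exists_eq_add_of_le' hm
    obtain ⟨i, hi⟩ := mem_iUnion.1 (hZ _ hxm)
    exact mem_iUnion.2 ⟨⟨m, i⟩, hi⟩
  exact le_antisymm (ge_of_tendsto (ENNReal.tendsto_sum_nat_add _ hsum) htail) bot_le

end CoverEstimates

section KraftCodes

variable {W : Type*} [Fintype W]

/-- Kraft's inequality for codeword lengths, measured in nats: `∑ exp(-L w) ≤ 1`. -/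
def SatisfiesKraft (L : W → ℝ) : Prop :=
  ∑ w, Real.exp (-L w) ≤ 1

lemma SatisfiesKraft.sum_blocks {L : W → ℝ} (hL : SatisfiesKraft L) (m : ℕ) :
    SatisfiesKraft fun b : Fin m → W => ∑ i, L (b i) := by
  have hpow : ∑ b : Fin m → W, Real.exp (-∑ i, L (b i)) = (∑ w, Real.exp (-L w)) ^ m := by
    simp only [Finset.sum_pow', ← Finset.sum_neg_distrib, Real.exp_sum, Fintype.piFinset_univ]
  rw [SatisfiesKraft, hpow]
  exact pow_le_one₀ (by positivity) hL

lemma SatisfiesKraft.card_le_exp {L : W → ℝ} (hL : SatisfiesKraft L) (A : ℝ) :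
    (Nat.card {w // L w ≤ A} : ℝ) ≤ Real.exp A := by
  classical
  rw [Nat.card_eq_fintype_card, Fintype.card_subtype, ← one_mul (Real.exp A),
    ← div_le_iff₀ (Real.exp_pos A), div_eq_mul_inv, ← Real.exp_neg, ← nsmul_eq_mul]
  calc _ ≤ ∑ w with L w ≤ A, Real.exp (-L w) :=
        Finset.card_nsmul_le_sum _ _ _ fun w hw =>
          Real.exp_le_exp.2 (neg_le_neg (Finset.mem_filter.1 hw).2)
    _ ≤ ∑ w, Real.exp (-L w) := Finset.sum_le_univ_sum_of_nonneg fun w => (Real.exp_pos _).le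
    _ ≤ 1 := hL

-- The lengths are natural numbers so that there are only countably many codes on words of any
-- given length.
lemma exists_satisfiesKraft_sum_mul_le {p : W → ℝ} (hp : ∀ w, 0 ≤ p w) (hsum : ∑ w, p w = 1) :
    ∃ L : W → ℕ, SatisfiesKraft (fun w => (L w : ℝ)) ∧
      ∑ w, p w * L w ≤ ∑ w, Real.negMulLog (p w) + 2 := by
  have hW : Nonempty W := by
    by_contra! h
    simp at hsum
  -- Averaging with the uniform distribution makes all codeword lengths finite.
  let q : W → ℝ := fun w => (p w + (Fintype.card W : ℝ)⁻¹) / 2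
  have hq : ∀ w, 0 < q w := fun w => by have := hp w; positivity
  have hqsum : ∑ w, q w = 1 := by
    simp only [q, ← Finset.sum_div, Finset.sum_add_distrib, hsum, Finset.sum_const,
      Finset.card_univ, nsmul_eq_mul]
    rw [mul_inv_cancel₀ (by simp)]
    norm_num
  have hq1 : ∀ w, q w ≤ 1 := fun w =>
    hqsum ▸ Finset.single_le_sum (fun v _ => (hq v).le) (Finset.mem_univ w)
  refine ⟨fun w => ⌈-Real.log (q w)⌉₊, ?_, ?_⟩
  · refine (Finset.sum_le_sum fun w _ => ?_).trans_eq hqsum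
    rw [← Real.le_log_iff_exp_le (hq w)]
    exact neg_le.1 (Nat.le_ceil _)
  · have hterm : ∀ w, p w * ⌈-Real.log (q w)⌉₊ ≤ Real.negMulLog (p w) + p w * 2 := fun w => by
      rcases (hp w).eq_or_lt with h | h
      · simp [← h]
      have hlog : Real.log (p w) - Real.log 2 ≤ Real.log (q w) := by
        rw [← Real.log_div h.ne' two_ne_zero]
        exact Real.log_le_log (by positivity) (by simp only [q]; gcongr; simp)
      have hceil := Nat.ceil_lt_add_one (neg_nonneg.2 (Real.log_nonpos (hq w).le (hq1 w)))
      have hlen : (⌈-Real.log (q w)⌉₊ : ℝ) ≤ -Real.log (p w) + 2 := by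
        linarith [Real.log_two_lt_d9]
      calc _ ≤ p w * (-Real.log (p w) + 2) := mul_le_mul_of_nonneg_left hlen h.le
        _ = _ := by rw [Real.negMulLog]; ring
    calc _ ≤ ∑ w, (Real.negMulLog (p w) + p w * 2) := Finset.sum_le_sum fun w _ => hterm w
      _ = _ := by rw [Finset.sum_add_distrib, ← Finset.sum_mul, hsum, one_mul]

lemma exists_satisfiesKraft_integral_le {Ω : Type*} [MeasurableSpace Ω] {μ : Measure Ω}
    [IsProbabilityMeasure μ] [MeasurableSpace W] [MeasurableSingletonClass W] {a : Ω → W}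
    (ha : Measurable a) :
    ∃ L : W → ℕ, SatisfiesKraft (fun w => (L w : ℝ)) ∧
      ∫ x, (L (a x) : ℝ) ∂μ ≤ ∑ w, Real.negMulLog (μ.real (a ⁻¹' {w})) + 2 := by
  have : IsProbabilityMeasure (μ.map a) := Measure.isProbabilityMeasure_map ha.aemeasurable
  obtain ⟨L, hL, hsum⟩ := exists_satisfiesKraft_sum_mul_le (p := fun w => (μ.map a).real {w})
    (fun w => measureReal_nonneg) (by simp)
  refine ⟨L, hL, ?_⟩
  simp only [map_measureReal_apply ha (measurableSet_singleton _)] at hsum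
  rw [← integral_map (f := fun w => (L w : ℝ)) ha.aemeasurable
    Measurable.of_discrete.aestronglyMeasurable, integral_fintype Integrable.of_finite]
  simpa only [map_measureReal_apply ha (measurableSet_singleton _), smul_eq_mul] using hsum

end KraftCodes

section Blocks

variable {T : X → X} {W : Type*} {U : W → Set X} {k : ℕ}

/-- The points lying in `U p` whose iterates at the times `r, r + k, r + 2k, …` run through the
sets `U` spelled by the word `b`: the first `r` iterates and the `m` subsequent blocks of `k`
iterates are then determined up to the Bowen diameter of the sets `U`. -/
def blockSet (T : X → X) (U : W → Set X) (k r : ℕ) {m : ℕ} (p : W) (b : Fin m → W) : Set X :=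
  {z | z ∈ U p ∧ ∀ i : Fin m, T^[r + i * k] z ∈ U (b i)}

lemma blockSet_subset_bowenBall [PseudoMetricSpace X] {ε : ℝ}
    (hU : ∀ w, ∀ z ∈ U w, U w ⊆ bowenBall T z k ε) {r m : ℕ} (hr : r ≤ k) {p : W}
    {b : Fin m → W} {z : X} (hz : z ∈ blockSet T U k r p b) :
    blockSet T U k r p b ⊆ bowenBall T z (m * k) ε := by
  intro y hy j hj
  rcases lt_or_ge j r with hjr | hjr
  · exact hU p z hz.1 hy.1 j (hjr.trans_le hr)
  obtain ⟨l, rfl⟩ := Nat.exists_eq_add_of_le hjr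
  have hk : 0 < k := Nat.pos_of_ne_zero fun h => by simp [h] at hj
  have hi : l / k < m := (Nat.div_lt_iff_lt_mul hk).2 ((Nat.le_add_left l r).trans_lt hj)
  have hsplit : l % k + (r + l / k * k) = r + l := by
    rw [add_left_comm, Nat.mod_add_div']
  simpa only [← Function.iterate_add_apply, hsplit] using
    hU _ _ (hz.2 ⟨_, hi⟩) (hy.2 ⟨_, hi⟩) _ (Nat.mod_lt l hk)

lemma sum_range_mul_eq_sum_sum {M : Type*} [AddCommMonoid M] (f : ℕ → M) (m k : ℕ) :
    ∑ j ∈ Finset.range (m * k), f j =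
      ∑ r ∈ Finset.range k, ∑ i ∈ Finset.range m, f (r + i * k) := by
  induction m with
  | zero => simp
  | succ m ih =>
    rw [Nat.succ_mul, Finset.sum_range_add, ih]
    simp only [Finset.sum_range_succ, Finset.sum_add_distrib, add_comm (m * k)]

lemma exists_mem_blockSet {L : W → ℝ} {c : X → ℝ} (hc : ∀ z, ∃ w, z ∈ U w ∧ L w ≤ c z)
    (hk : 0 < k) {x : X} {m : ℕ} {A : ℝ}
    (hx : ∑ j ∈ Finset.range (m * k), c (T^[j] x) ≤ k * A) :
    ∃ (r : Fin k) (p : W) (b : Fin m → W), ∑ i, L (b i) ≤ A ∧ x ∈ blockSet T U k r p b := by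
  rw [sum_range_mul_eq_sum_sum] at hx
  -- The sums over the `k` residue classes modulo `k` have mean at most `A`.
  obtain ⟨r, hr, hxr⟩ : ∃ r ∈ Finset.range k,
      ∑ i ∈ Finset.range m, c (T^[r + i * k] x) ≤ A :=
    Finset.exists_le_of_sum_le (by simpa using hk.ne') (hx.trans_eq (by simp))
  choose w hw hwc using hc
  refine ⟨⟨r, Finset.mem_range.1 hr⟩, w x, fun i => w (T^[r + i * k] x), ?_, hw x, fun i => hw _⟩
  calc ∑ i : Fin m, L (w (T^[r + i * k] x)) ≤ ∑ i : Fin m, c (T^[r + i * k] x) :=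
        Finset.sum_le_sum fun i _ => hwc _
    _ = ∑ i ∈ Finset.range m, c (T^[r + i * k] x) :=
        Fin.sum_univ_eq_sum_range (fun i => c (T^[r + i * k] x)) m
    _ ≤ A := hxr

lemma tsum_ofReal_exp_ne_top {C k τ s : ℝ} (hC : 0 ≤ C) (hk : 0 < k) (hτ : τ < s) :
    ∑' m : ℕ, ENNReal.ofReal (C * Real.exp ((m + 1) * k * τ) * Real.exp (-s * (m * k))) ≠ ∞ := by
  have hgeom : Summable fun m : ℕ => Real.exp (-((s - τ) * k)) ^ m :=
    summable_geometric_of_lt_one (Real.exp_pos _).le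
      (Real.exp_lt_one_iff.2 (neg_lt_zero.2 (mul_pos (sub_pos.2 hτ) hk)))
  have hsum := (hgeom.mul_left (C * Real.exp (k * τ))).congr
    (g := fun m : ℕ => C * Real.exp ((m + 1) * k * τ) * Real.exp (-s * (m * k))) fun m => by
      simp only [← Real.exp_nat_mul, mul_assoc, ← Real.exp_add]
      ring_nf
  rw [← ENNReal.ofReal_tsum_of_nonneg (fun m => by positivity) hsum]
  exact ENNReal.ofReal_ne_top

lemma bowenH_cheaply_coded_eq_zero [PseudoMetricSpace X] [Fintype W] {s ε : ℝ}
    (hU : ∀ w, ∀ z ∈ U w, U w ⊆ bowenBall T z k ε) (hk : 0 < k) {L : W → ℝ}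
    (hL : SatisfiesKraft L) {c : X → ℝ} (hc : ∀ z, ∃ w, z ∈ U w ∧ L w ≤ c z) {τ : ℝ} (hτ : τ < s)
    (n : ℕ) :
    bowenH T {x | ∃ᶠ m : ℕ in atTop, ∑ j ∈ Finset.range (m * k), c (T^[j] x) ≤
      k * ((m + 1) * k * τ)} s ε n = 0 := by
  let ι : ℕ → Type _ := fun m =>
    Fin k × W × {b : Fin m → W // ∑ i, L (b i) ≤ (m + 1) * k * τ}
  have hcard : ∀ m, (Nat.card (ι m) : ℝ) ≤ k * Nat.card W * Real.exp ((m + 1) * k * τ) := by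
    intro m
    simp only [ι, Nat.card_prod, Nat.card_fin, Nat.cast_mul, ← mul_assoc]
    gcongr
    exact (hL.sum_blocks m).card_le_exp _
  refine bowenH_setOf_frequently_eq_zero (ι := ι)
    (fun m a => blockSet T U k a.1 a.2.1 a.2.2.1) (ν := fun m => m * k)
    (tendsto_id.atTop_mul_const' hk) (fun m x hx => ?_)
    (fun m a z hz => blockSet_subset_bowenBall hU a.1.2.le hz) ?_
  · obtain ⟨r, p, b, hb, hx⟩ := exists_mem_blockSet hc hk hx
    exact mem_iUnion.2 ⟨⟨r, p, b, hb⟩, hx⟩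
  · refine ne_top_of_le_ne_top
      (tsum_ofReal_exp_ne_top (C := k * Nat.card W) (by positivity) (Nat.cast_pos.2 hk) hτ)
      (ENNReal.tsum_le_tsum fun m => ?_)
    rw [tsum_fintype, Finset.sum_const, Finset.card_univ, ← Nat.card_eq_fintype_card, nsmul_eq_mul,
      ← ENNReal.ofReal_natCast, ← ENNReal.ofReal_mul (Nat.cast_nonneg _), Nat.cast_mul]
    gcongr
    exact hcard m

end Blocks

section ContinuousCosts

lemma exists_continuousMap_cost [TopologicalSpace X] [NormalSpace X] {W : Type*} [Finite W]
    {K U : W → Set X} (hK : ∀ w, IsClosed (K w)) (hU : ∀ w, IsOpen (U w))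
    (hKU : ∀ w, K w ⊆ U w) (hcover : ∀ z, ∃ w, z ∈ K w) {L : W → ℝ} (hL : ∀ w, 0 ≤ L w) :
    ∃ g : C(X, ℝ), (∀ z, ∃ w, z ∈ U w ∧ L w ≤ g z) ∧ ∀ w, ∀ z ∈ K w, g z ≤ L w := by
  have := Fintype.ofFinite W
  rcases isEmpty_or_nonempty W with hW | hW
  · exact ⟨0, fun z => isEmptyElim (hcover z).choose, fun w => isEmptyElim w⟩
  choose f hf0 hf1 hf using fun w => exists_continuous_zero_one_of_isClosed (hK w)
    (hU w).isClosed_compl (disjoint_compl_right_iff_subset.2 (hKU w))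
  let M := ∑ w, L w
  have hM : ∀ w, L w ≤ M := fun w =>
    Finset.single_le_sum (fun v _ => hL v) (Finset.mem_univ w)
  have hM0 : 0 ≤ M := Finset.sum_nonneg fun w _ => hL w
  -- Outside `U w` the function with index `w` is too large to contribute to the infimum.
  let g : C(X, ℝ) := Finset.univ.inf' Finset.univ_nonempty
    fun w => ContinuousMap.const X (L w) + M • f w
  have hg : ∀ z, g z = Finset.univ.inf' Finset.univ_nonempty fun w => L w + M * f w z :=
    fun z => ContinuousMap.inf'_apply _ _ _
  have hgK : ∀ w, ∀ z ∈ K w, g z ≤ L w := fun w z hz => by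
    rw [hg]
    exact (Finset.inf'_le _ (Finset.mem_univ w)).trans_eq (by simp [hf0 w hz])
  refine ⟨g, fun z => ?_, hgK⟩
  obtain ⟨w, -, hw⟩ := Finset.exists_mem_eq_inf' (Finset.univ_nonempty (α := W))
    fun w => L w + M * f w z
  by_cases hz : z ∈ U w
  · exact ⟨w, hz, by rw [hg, hw]; exact le_add_of_nonneg_right (mul_nonneg hM0 (hf w z).1)⟩
  · obtain ⟨v, hv⟩ := hcover z
    have hfz : f w z = 1 := hf1 w hz
    exact ⟨v, hKU v hv, by rw [hg, hw, hfz, mul_one]; linarith [hM v, hL w]⟩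

end ContinuousCosts

section Itineraries

variable {ι : Type*} {T : X → X} {k : ℕ}

/-- The labels `(P z, P (T z), …, P (T^[k-1] z))` of the first `k` iterates of a point. -/
def itinerary (T : X → X) (P : X → ι) (k : ℕ) (z : X) : Fin k → ι :=
  fun j => P (T^[j] z)

/-- The points whose first `k` iterates visit successively the sets `A i` spelled by the word
`w`. The sets `A i` may overlap, so that a point can have many words. -/
def itinerarySet (T : X → X) (A : ι → Set X) (w : Fin k → ι) : Set X :=
  {z | ∀ j : Fin k, T^[j] z ∈ A (w j)}

lemma itinerarySet_eq_iInter (A : ι → Set X) (w : Fin k → ι) :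
    itinerarySet T A w = ⋂ j : Fin k, T^[j] ⁻¹' A (w j) := by
  ext z
  simp only [itinerarySet, mem_ofPred_eq, mem_iInter, mem_preimage]

lemma itinerarySet_mono {A A' : ι → Set X} (h : ∀ i, A i ⊆ A' i) (w : Fin k → ι) :
    itinerarySet T A w ⊆ itinerarySet T A' w :=
  fun _ hz j => h _ (hz j)

lemma mem_itinerarySet_itinerary {P : X → ι} {A : ι → Set X} (h : ∀ z, z ∈ A (P z)) (z : X) :
    z ∈ itinerarySet T A (itinerary T P k z) :=
  fun _ => h _

lemma isOpen_itinerarySet [TopologicalSpace X] (hT : Continuous T) {A : ι → Set X}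
    (hA : ∀ i, IsOpen (A i)) (w : Fin k → ι) : IsOpen (itinerarySet T A w) := by
  rw [itinerarySet_eq_iInter]
  exact isOpen_iInter_of_finite fun j => (hA _).preimage (hT.iterate j)

lemma isClosed_itinerarySet [TopologicalSpace X] (hT : Continuous T) {A : ι → Set X}
    (hA : ∀ i, IsClosed (A i)) (w : Fin k → ι) : IsClosed (itinerarySet T A w) := by
  rw [itinerarySet_eq_iInter]
  exact isClosed_iInter fun j => (hA _).preimage (hT.iterate j)

lemma itinerarySet_ball_subset_bowenBall [PseudoMetricSpace X] {e : ι → X} {ε : ℝ}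
    {w : Fin k → ι} {z : X} (hz : z ∈ itinerarySet T (fun i => Metric.ball (e i) (ε / 2)) w) :
    itinerarySet T (fun i => Metric.ball (e i) (ε / 2)) w ⊆ bowenBall T z k ε :=
  fun _ hy j hj => (dist_triangle_right _ _ _).trans_lt
    ((add_lt_add (hz ⟨j, hj⟩) (hy ⟨j, hj⟩)).trans_eq (add_halves ε))

variable [MeasurableSpace X]

lemma measurable_itinerary [MeasurableSpace ι] {P : X → ι} (hT : Measurable T)
    (hP : Measurable P) (k : ℕ) : Measurable (itinerary T P k) :=
  measurable_pi_lambda _ fun j => hP.comp (hT.iterate j)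

lemma ofReal_sum_negMulLog_itinerary_le_partInfo {N : ℕ} (μ : Measure X)
    [IsProbabilityMeasure μ] (P : X → Fin N) (k : ℕ) :
    ENNReal.ofReal (∑ w, Real.negMulLog (μ.real (itinerary T P k ⁻¹' {w}))) ≤
      partInfo T μ (fun z => P z) k := by
  let spell : (Fin k → Fin N) → List ℕ := fun w => List.ofFn fun j => (w j : ℕ)
  have hspell : Function.Injective spell := fun w w' h =>
    funext fun j => Fin.ext (congrFun (List.ofFn_injective h) j)
  have hlabels : (fun z => (List.range k).map fun j => (P (T^[j] z) : ℕ)) =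
      spell ∘ itinerary T P k :=
    funext fun z => List.ext_getElem (by simp [spell]) (by simp [spell, itinerary])
  rw [ENNReal.ofReal_sum_of_nonneg fun w _ =>
    Real.negMulLog_nonneg measureReal_nonneg measureReal_le_one,
    ← tsum_fintype (L := .unconditional _)]
  refine le_trans (le_of_eq ?_) (ENNReal.tsum_comp_le_tsum_of_injective hspell _)
  simp only [hlabels, preimage_comp, ← image_singleton (f := spell), hspell.preimage_image,
    measureReal_def]

lemma exists_satisfiesKraft_integral_itinerary_lt {N : ℕ} {μ : Measure X}
    [IsProbabilityMeasure μ] (hT : Measurable T) {P : X → Fin N} (hP : Measurable P) {τ : ℝ}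
    (hμ : ksEntropy T μ < ENNReal.ofReal τ) :
    ∃ k, 0 < k ∧ ∃ L : (Fin k → Fin N) → ℕ, SatisfiesKraft (fun w => (L w : ℝ)) ∧
      ∫ z, (L (itinerary T P k z) : ℝ) ∂μ < k * τ := by
  obtain ⟨σ, hσ0, hμσ, hστ⟩ := ENNReal.lt_iff_exists_real_btwn.1 hμ
  replace hστ : σ < τ := (ENNReal.ofReal_lt_ofReal_iff_of_nonneg hσ0).1 hστ
  have hliminf : atTop.liminf (fun k : ℕ => partInfo T μ (fun z => P z) k / (k : ℝ≥0∞)) <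
      ENNReal.ofReal σ := by
    refine lt_of_le_of_lt ?_ hμσ
    refine le_iSup₂_of_le (f := fun P (_ : Measurable P) => ⨆ _ : (range P).Finite,
      atTop.liminf fun k : ℕ => partInfo T μ P k / (k : ℝ≥0∞)) (fun z => P z)
      (Measurable.of_discrete.comp hP) (le_iSup_of_le ?_ le_rfl)
    exact (finite_range ((↑) : Fin N → ℕ)).subset (range_comp_subset_range P _)
  -- For long words the loss of two nats in Shannon's code becomes negligible.
  obtain ⟨k, hk, hk2⟩ := ((frequently_lt_of_liminf_lt (by isBoundedDefault) hliminf).and_eventually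
    (tendsto_natCast_atTop_atTop.eventually_gt_atTop (2 / (τ - σ)))).exists
  rw [div_lt_iff₀ (sub_pos.2 hστ)] at hk2
  have hk0 : 0 < k := Nat.pos_of_ne_zero fun h => by norm_num [h] at hk2
  rw [ENNReal.div_lt_iff (Or.inl (by simpa using hk0.ne')) (Or.inl (by simp)),
    ← ENNReal.ofReal_natCast, ← ENNReal.ofReal_mul hσ0] at hk
  have hent : ∑ w, Real.negMulLog (μ.real (itinerary T P k ⁻¹' {w})) < σ * k :=
    (ENNReal.ofReal_lt_ofReal_iff_of_nonneg (Finset.sum_nonneg fun w _ =>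
      Real.negMulLog_nonneg measureReal_nonneg measureReal_le_one)).1
      ((ofReal_sum_negMulLog_itinerary_le_partInfo μ P k).trans_lt hk)
  obtain ⟨L, hL, hlen⟩ := exists_satisfiesKraft_integral_le (μ := μ) (measurable_itinerary hT hP k)
  exact ⟨k, hk0, L, hL, by linarith⟩

lemma exists_measurable_fin_dist_lt (X : Type*) [PseudoMetricSpace X] [CompactSpace X]
    [MeasurableSpace X] [OpensMeasurableSpace X] {ρ : ℝ} (hρ : 0 < ρ) :
    ∃ (N : ℕ) (e : Fin N → X) (P : X → Fin N), Measurable P ∧ ∀ z, dist z (e (P z)) < ρ := by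
  obtain ⟨t, -, ht, hcover⟩ := finite_cover_balls_of_compact (isCompact_univ (X := X)) hρ
  obtain ⟨N, e, -, rfl⟩ := ht.fin_param
  have hnear : ∀ z, ∃ i, ∃ hi : i < N, z ∈ Metric.ball (e ⟨i, hi⟩) ρ := fun z => by
    obtain ⟨_, ⟨i, rfl⟩, hz⟩ := mem_iUnion₂.1 (hcover (mem_univ z))
    exact ⟨i, i.2, hz⟩
  classical
  have hfind : Measurable fun z => Nat.find (hnear z) := measurable_find hnear fun i => by
    rw [ofPred_exists]
    exact MeasurableSet.iUnion fun hi => measurableSet_ball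
  refine ⟨N, e, fun z => ⟨Nat.find (hnear z), (Nat.find_spec (hnear z)).fst⟩,
    measurable_to_countable' fun i => ?_, fun z => (Nat.find_spec (hnear z)).snd⟩
  simpa only [preimage, mem_singleton_iff, Fin.ext_iff] using
    hfind (measurableSet_singleton (i : ℕ))

end Itineraries

section LimitMeasures

variable {T : X → X} {x : X}

lemma sum_iterate_div_eq_birkhoffAverage (T : X → X) (f : X → ℝ) (n : ℕ) (x : X) :
    (∑ j ∈ Finset.range n, f (T^[j] x)) / (n : ℝ) = birkhoffAverage ℝ T f n x := by
  rw [birkhoffAverage, birkhoffSum, smul_eq_mul, div_eq_inv_mul]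

/-- The empirical measure `(1/n) Σ_{j<n} δ_{T^j x}` of an orbit segment; it is the zero measure
for `n = 0`. -/
noncomputable def empiricalMeasure [MeasurableSpace X] (T : X → X) (x : X) (n : ℕ) : Measure X :=
  (n : ℝ≥0∞)⁻¹ • ∑ j ∈ Finset.range n, Measure.dirac (T^[j] x)

lemma isProbabilityMeasure_empiricalMeasure [MeasurableSpace X] (T : X → X) (x : X) {n : ℕ}
    (hn : n ≠ 0) :
    IsProbabilityMeasure (empiricalMeasure T x n) := ⟨by
  simp only [empiricalMeasure, Measure.smul_apply, Measure.finsetSum_apply, measure_univ,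
    Finset.sum_const, Finset.card_range, nsmul_eq_mul, mul_one, smul_eq_mul]
  exact ENNReal.inv_mul_cancel (Nat.cast_ne_zero.2 hn) (ENNReal.natCast_ne_top _)⟩

variable [TopologicalSpace X]

lemma isBoundedUnder_le_average [CompactSpace X] (T : X → X) (f : C(X, ℝ)) (x : X) :
    IsBoundedUnder (· ≤ ·) atTop fun n : ℕ => (∑ j ∈ Finset.range n, f (T^[j] x)) / (n : ℝ) := by
  refine isBoundedUnder_of ⟨‖f‖, fun n => div_le_of_le_mul₀ (Nat.cast_nonneg _) (norm_nonneg _) ?_⟩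
  calc _ ≤ ∑ _j ∈ Finset.range n, ‖f‖ := Finset.sum_le_sum fun j _ => f.apply_le_norm _
    _ = ‖f‖ * n := by rw [Finset.sum_const, Finset.card_range, nsmul_eq_mul, mul_comm]

variable [MeasurableSpace X] {μ : Measure X}

lemma IsLimitMeasure.integral_le_limsup [CompactSpace X] (hμ : IsLimitMeasure T x μ)
    (f : C(X, ℝ)) :
    ∫ y, f y ∂μ ≤
      limsup (fun n : ℕ => (∑ j ∈ Finset.range n, f (T^[j] x)) / (n : ℝ)) atTop := by
  obtain ⟨φ, hφ, hlim⟩ := hμ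
  refine le_of_forall_gt_imp_ge_of_dense fun a ha => ?_
  have hev := hφ.tendsto_atTop.eventually
    (eventually_lt_of_limsup_lt ha (isBoundedUnder_le_average T f x))
  exact le_of_tendsto (hlim f) (hev.mono fun n hn => hn.le)

lemma isGeneric_of_limsup_le [CompactSpace X]
    (h : ∀ f : C(X, ℝ), limsup (fun n : ℕ => (∑ j ∈ Finset.range n, f (T^[j] x)) / (n : ℝ))
      atTop ≤ ∫ y, f y ∂μ) : IsGeneric T μ x := by
  have hev : ∀ (f : C(X, ℝ)) (a : ℝ), ∫ y, f y ∂μ < a →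
      ∀ᶠ n : ℕ in atTop, (∑ j ∈ Finset.range n, f (T^[j] x)) / (n : ℝ) < a := fun f a ha =>
    eventually_lt_of_limsup_lt ((h f).trans_lt ha) (isBoundedUnder_le_average T f x)
  intro f
  refine tendsto_order.2 ⟨fun a ha => ?_, fun a ha => hev f a ha⟩
  -- Lower bounds for `f` are upper bounds for `-f`.
  refine (hev (-f) (-a) (by simpa [integral_neg] using ha)).mono fun n hn => ?_
  simpa [neg_div] using hn

lemma IsLimitMeasure.measurePreserving [CompactSpace X] [HasOuterApproxClosed X] [BorelSpace X]
    [IsFiniteMeasure μ] (hT : Continuous T) (hμ : IsLimitMeasure T x μ) :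
    MeasurePreserving T μ μ := by
  refine ⟨hT.measurable, ext_of_forall_integral_eq_of_IsFiniteMeasure fun f => ?_⟩
  obtain ⟨φ, hφ, hlim⟩ := hμ
  simp only [sum_iterate_div_eq_birkhoffAverage] at hlim
  let g : C(X, ℝ) := f.toContinuousMap
  have hshift := (tendsto_birkhoffAverage_apply_sub_birkhoffAverage' ℝ
    f.isBounded_range T x).comp hφ.tendsto_atTop
  have hcomp : ∀ n, birkhoffAverage ℝ T (g.comp ⟨T, hT⟩) n x = birkhoffAverage ℝ T g n (T x) :=
    fun n => by simp [birkhoffAverage, birkhoffSum, ← Function.iterate_succ_apply,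
      Function.iterate_succ_apply']
  rw [integral_map hT.measurable.aemeasurable f.continuous.aestronglyMeasurable, ← sub_eq_zero]
  refine tendsto_nhds_unique ((hlim (g.comp ⟨T, hT⟩)).sub (hlim g)) ?_
  simpa only [hcomp] using! hshift

lemma frequently_sum_le_of_isLimitMeasure (hx : IsLimitMeasure T x μ) {g : C(X, ℝ)}
    (hg : 0 ≤ g) {b : ℝ} (hb : ∫ y, g y ∂μ < b) {k : ℕ} (hk : 0 < k) :
    ∃ᶠ m : ℕ in atTop, ∑ j ∈ Finset.range (m * k), g (T^[j] x) ≤ (m + 1) * k * b := by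
  have hb0 : 0 ≤ b := (integral_nonneg hg).trans hb.le
  obtain ⟨φ, hφ, hlim⟩ := hx
  refine frequently_atTop.2 fun m₀ => ?_
  obtain ⟨i, hi, hφi⟩ := (((hlim g).eventually_lt_const hb).and
    (hφ.tendsto_atTop.eventually_ge_atTop (m₀ * k + 1))).exists
  have hφpos : (0 : ℝ) < φ i := Nat.cast_pos.2 ((Nat.succ_pos _).trans_le hφi)
  rw [div_lt_iff₀ hφpos] at hi
  refine ⟨φ i / k, (Nat.le_div_iff_mul_le hk).2 (Nat.le_of_succ_le hφi), ?_⟩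
  calc ∑ j ∈ Finset.range (φ i / k * k), g (T^[j] x)
      ≤ ∑ j ∈ Finset.range (φ i), g (T^[j] x) :=
        Finset.sum_le_sum_of_subset_of_nonneg
          (Finset.range_mono (Nat.div_mul_le_self _ _)) fun _ _ _ => hg _
    _ ≤ b * φ i := hi.le
    _ ≤ b * ((φ i / k : ℕ) + 1 : ℕ) * k := by
        rw [mul_assoc, ← Nat.cast_mul, mul_comm _ k]
        gcongr
        exact (Nat.lt_mul_div_succ (φ i) hk).le
    _ = ((φ i / k : ℕ) + 1) * k * b := by push_cast; ring

lemma integral_empiricalMeasure [OpensMeasurableSpace X] (T : X → X) (x : X) (n : ℕ)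
    (f : C(X, ℝ)) :
    ∫ y, f y ∂empiricalMeasure T x n = (∑ j ∈ Finset.range n, f (T^[j] x)) / n := by
  have hf : StronglyMeasurable f := f.continuous.measurable.stronglyMeasurable
  rw [empiricalMeasure, integral_smul_measure, integral_finsetSum_measure fun j _ =>
    integrable_dirac' hf enorm_lt_top]
  simp only [integral_dirac' _ _ hf, ENNReal.toReal_inv, ENNReal.toReal_natCast, smul_eq_mul,
    div_eq_inv_mul]

lemma exists_isLimitMeasure [CompactSpace X] [T2Space X] [SecondCountableTopology X]
    [BorelSpace X] (T : X → X) (x : X) :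
    ∃ μ : Measure X, IsProbabilityMeasure μ ∧ IsLimitMeasure T x μ := by
  obtain ⟨μ, φ, hφ, hlim⟩ := CompactSpace.tendsto_subseq (X := ProbabilityMeasure X) fun n =>
    ⟨_, isProbabilityMeasure_empiricalMeasure T x n.succ_ne_zero⟩
  refine ⟨μ, inferInstance, fun i => φ i + 1, fun i j hij => Nat.succ_lt_succ (hφ hij),
    fun f => ?_⟩
  have hf := ProbabilityMeasure.tendsto_iff_forall_integral_tendsto.1 hlim
    (BoundedContinuousFunction.mkOfCompact f)
  exact hf.congr fun i => integral_empiricalMeasure T x (φ i + 1) f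

end LimitMeasures

section BowenTheorem

variable [PseudoMetricSpace X] [CompactSpace X] [MeasurableSpace X] [BorelSpace X] {T : X → X}

-- This is Bowen's theorem, with `κ` below enumerating the countably many codes.
theorem bowenEntropy_le_of_exists_isLimitMeasure (hT : Continuous T) {Z : Set X} {t : ℝ≥0}
    (hZ : ∀ x ∈ Z, ∃ μ : Measure X, IsProbabilityMeasure μ ∧ IsLimitMeasure T x μ ∧
      ksEntropy T μ ≤ t) :
    bowenEntropy T Z ≤ t := by
  refine bowenEntropy_le_of_bowenH_eq_zero fun ε hε s hts n => ?_
  obtain ⟨τ, htτ, hτs⟩ := exists_between hts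
  obtain ⟨N, e, P, hP, hPe⟩ := exists_measurable_fin_dist_lt X (half_pos (half_pos hε))
  let κ := Σ k : ℕ, {L : (Fin (k + 1) → Fin N) → ℕ // SatisfiesKraft fun w => (L w : ℝ)}
  choose g hgU hgK using fun a : κ => exists_continuousMap_cost
    (isClosed_itinerarySet hT fun i => Metric.isClosed_closedBall (x := e i) (ε := ε / 2 / 2))
    (isOpen_itinerarySet hT fun i => Metric.isOpen_ball (x := e i) (ε := ε / 2))
    (itinerarySet_mono fun i => Metric.closedBall_subset_ball (half_lt_self (half_pos hε)))
    (fun z => ⟨_, mem_itinerarySet_itinerary (fun y => (hPe y).le) z⟩)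
    fun w => (a.2.1 w).cast_nonneg (α := ℝ)
  have hcheap := bowenH_iUnion_eq_zero (n := n) fun a : κ =>
    bowenH_cheaply_coded_eq_zero (fun w z hz => itinerarySet_ball_subset_bowenBall hz)
      a.1.succ_pos a.2.2 (hgU a) (NNReal.coe_lt_coe.2 hτs) n
  refine le_antisymm ((bowenH_mono fun x hx => ?_).trans_eq hcheap) bot_le
  obtain ⟨μ, hμ, hxμ, hent⟩ := hZ x hx
  obtain ⟨k, hk, L, hL, hint⟩ := exists_satisfiesKraft_integral_itinerary_lt hT.measurable hP
    (τ := τ) (hent.trans_lt (by simpa using htτ))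
  obtain ⟨k, rfl⟩ := Nat.exists_eq_succ_of_ne_zero hk.ne'
  let a : κ := ⟨k, L, hL⟩
  have hg0 : 0 ≤ g a := fun z => by
    obtain ⟨w, -, hw⟩ := hgU a z
    exact (L w).cast_nonneg.trans hw
  have hgint : ∫ z, g a z ∂μ < (k + 1 : ℕ) * τ := by
    refine lt_of_le_of_lt (integral_mono ?_ ?_ fun z => hgK a _ z
      (mem_itinerarySet_itinerary (fun y => (hPe y).le) z)) hint
    · exact (g a).continuous.integrable_of_hasCompactSupport (.of_compactSpace _)
    · exact (Integrable.of_finite (f := fun w => (L w : ℝ))).comp_measurable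
        (measurable_itinerary hT.measurable hP _)
  exact mem_iUnion.2 ⟨a, (frequently_sum_le_of_isLimitMeasure hxμ hg0 hgint hk).mono fun m hm =>
    hm.trans_eq (by ring)⟩

end BowenTheorem

section Sublevels

variable {B : Type*} [AddCommMonoid B] [Module ℝ B] [TopologicalSpace B]

/-- `X_Φ(α;E)`: the points whose Birkhoff averages of `Φ` are asymptotically at most `α` in every
direction `w ∈ E`. -/
def sublevelPoints (T : X → X) (Φ : X → WeakDual ℝ B) (α : WeakDual ℝ B) (E : Set B) : Set X :=
  {x : X | ∀ w ∈ E,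
    Filter.limsup (fun n : ℕ =>
      (((n : ℝ)⁻¹ • ∑ j ∈ Finset.range n, Φ (T^[j] x)) : WeakDual ℝ B) w)
      Filter.atTop ≤ α w}

/-- `M_Φ(α;E)`: the invariant probability measures whose integral of `Φ` is at most `α` in every
direction `w ∈ E`. -/
def sublevelMeasures [MeasurableSpace X] (T : X → X) (Φ : X → WeakDual ℝ B) (α : WeakDual ℝ B)
    (E : Set B) : Set (Measure X) :=
  {μ : Measure X | IsProbabilityMeasure μ ∧ MeasurePreserving T μ μ ∧
    ∀ w ∈ E, (∫ x, Φ x w ∂μ) ≤ α w}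

variable {T : X → X} {Φ : X → WeakDual ℝ B} {α : WeakDual ℝ B} {E : Set B}

lemma weakDual_average_apply (φ : ℕ → WeakDual ℝ B) (n : ℕ) (w : B) :
    (((n : ℝ)⁻¹ • ∑ j ∈ Finset.range n, φ j) : WeakDual ℝ B) w =
      (∑ j ∈ Finset.range n, φ j w) / n := by
  let evalAt : WeakDual ℝ B →+ ℝ :=
    { toFun := fun ψ => ψ w, map_zero' := rfl, map_add' := fun _ _ => rfl }
  rw [div_eq_inv_mul, ← smul_eq_mul]
  exact congrArg ((n : ℝ)⁻¹ • ·) (map_sum evalAt φ _)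

lemma mem_sublevelPoints {x : X} :
    x ∈ sublevelPoints T Φ α E ↔ ∀ w ∈ E,
      limsup (fun n : ℕ => (∑ j ∈ Finset.range n, Φ (T^[j] x) w) / n) atTop ≤ α w :=
  forall₂_congr fun w _ => by simp only [weakDual_average_apply]

/-- The coordinate `x ↦ ⟨Φ x, w⟩` of a weak-star continuous `Φ` in the direction `w`, as a
continuous function. -/
noncomputable def weakDualCoord [TopologicalSpace X] (hΦ : Continuous Φ) (w : B) : C(X, ℝ) :=
  ⟨fun x => Φ x w, (WeakDual.eval_continuous w).comp hΦ⟩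

lemma setOf_isGeneric_subset_sublevelPoints [TopologicalSpace X] [MeasurableSpace X]
    {μ : Measure X} (hΦ : Continuous Φ) (hμ : μ ∈ sublevelMeasures T Φ α E) :
    {x | IsGeneric T μ x} ⊆ sublevelPoints T Φ α E := fun _ hx =>
  mem_sublevelPoints.2 fun w hw => (hx (weakDualCoord hΦ w)).limsup_eq.trans_le (hμ.2.2 w hw)

lemma IsLimitMeasure.mem_sublevelMeasures [TopologicalSpace X] [CompactSpace X]
    [HasOuterApproxClosed X] [MeasurableSpace X] [BorelSpace X] {x : X} {μ : Measure X}
    [IsProbabilityMeasure μ] (hμ : IsLimitMeasure T x μ) (hT : Continuous T) (hΦ : Continuous Φ)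
    (hx : x ∈ sublevelPoints T Φ α E) : μ ∈ sublevelMeasures T Φ α E :=
  ⟨inferInstance, hμ.measurePreserving hT, fun w hw =>
    (hμ.integral_le_limsup (weakDualCoord hΦ w)).trans (mem_sublevelPoints.1 hx w hw)⟩

section Saturated

variable [MetricSpace X] [CompactSpace X] [MeasurableSpace X] [BorelSpace X]

theorem bowenEntropy_sublevelPoints_le (hT : Continuous T) (hΦ : Continuous Φ)
    (α : WeakDual ℝ B) (E : Set B) :
    bowenEntropy T (sublevelPoints T Φ α E) ≤ ⨆ μ ∈ sublevelMeasures T Φ α E, ksEntropy T μ := by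
  rcases eq_or_ne (⨆ μ ∈ sublevelMeasures T Φ α E, ksEntropy T μ) ⊤ with htop | htop
  · exact htop ▸ le_top
  lift ⨆ μ ∈ sublevelMeasures T Φ α E, ksEntropy T μ to ℝ≥0 using htop with t ht
  refine bowenEntropy_le_of_exists_isLimitMeasure hT fun x hx => ?_
  obtain ⟨μ, hμ, hxμ⟩ := exists_isLimitMeasure T x
  exact ⟨μ, hμ, hxμ, ht ▸ le_iSup₂_of_le μ (hxμ.mem_sublevelMeasures hT hΦ hx) le_rfl⟩

theorem Saturated.bowenEntropy_sublevelPoints (h : Saturated T) (hT : Continuous T)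
    (hΦ : Continuous Φ) (α : WeakDual ℝ B) (E : Set B) :
    bowenEntropy T (sublevelPoints T Φ α E) = ⨆ μ ∈ sublevelMeasures T Φ α E, ksEntropy T μ := by
  refine le_antisymm (bowenEntropy_sublevelPoints_le hT hΦ α E) (iSup₂_le fun μ hμ => ?_)
  rw [← h μ hμ.1 hμ.2.1]
  exact bowenEntropy_mono (setOf_isGeneric_subset_sublevelPoints hΦ hμ)

end Saturated

section Surjective

variable [TopologicalSpace X] [MeasurableSpace X] {μ : Measure X}

lemma sublevelPoints_univ_eq_setOf_isGeneric [CompactSpace X] (hΦ : Continuous Φ)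
    (hsurj : ∀ f : C(X, ℝ), ∃ w, ∀ x, Φ x w = f x) (hα : ∀ w, α w = ∫ x, Φ x w ∂μ) :
    sublevelPoints T Φ α univ = {x | IsGeneric T μ x} := by
  refine Subset.antisymm (fun x hx => isGeneric_of_limsup_le fun f => ?_) fun x hx =>
    mem_sublevelPoints.2 fun w _ => ((hx (weakDualCoord hΦ w)).limsup_eq.trans (hα w).symm).le
  obtain ⟨w, hw⟩ := hsurj f
  simpa only [hw, hα] using mem_sublevelPoints.1 hx w (mem_univ w)

lemma sublevelMeasures_univ_eq_singleton [HasOuterApproxClosed X] [BorelSpace X]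
    [IsProbabilityMeasure μ] (hμT : MeasurePreserving T μ μ)
    (hsurj : ∀ f : C(X, ℝ), ∃ w, ∀ x, Φ x w = f x) (hα : ∀ w, α w = ∫ x, Φ x w ∂μ) :
    sublevelMeasures T Φ α univ = {μ} := by
  refine Subset.antisymm ?_
    (singleton_subset_iff.2 ⟨inferInstance, hμT, fun w _ => (hα w).ge⟩)
  rintro ν ⟨hν, -, hνα⟩
  have hle : ∀ f : C(X, ℝ), ∫ x, f x ∂ν ≤ ∫ x, f x ∂μ := fun f => by
    obtain ⟨w, hw⟩ := hsurj f
    simpa only [hα, hw] using hνα w (mem_univ w)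
  refine ext_of_forall_integral_eq_of_IsFiniteMeasure fun f => ?_
  let g : C(X, ℝ) := f.toContinuousMap
  have hge : ∫ x, g x ∂μ ≤ ∫ x, g x ∂ν := by
    simpa only [ContinuousMap.neg_apply, integral_neg, neg_le_neg_iff] using hle (-g)
  exact (hle g).antisymm hge

end Surjective

end Sublevels

section ContinuousFunctions

universe v

lemma small_of_secondCountableTopology [TopologicalSpace X] [T3Space X]
    [SecondCountableTopology X] : Small.{v} X :=
  let ⟨_, hι⟩ := TopologicalSpace.exists_embedding_l_infty X
  small_of_injective hι.injective

/-- The evaluation map `x ↦ δ_x ∈ C(X)*`, with `C(X)` replaced by the isomorphic Banach space of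
continuous functions on a copy of `X` in the universe `v`. -/
noncomputable def shrinkEval [TopologicalSpace X] [Small.{v} X] (x : X) :
    WeakDual ℝ C(Shrink.{v} X, ℝ) :=
  StrongDual.toWeakDual (ContinuousMap.evalCLM ℝ (Shrink.homeomorph X x))

variable [TopologicalSpace X] [Small.{v} X]

lemma shrinkEval_apply (x : X) (w : C(Shrink.{v} X, ℝ)) :
    shrinkEval x w = w (Shrink.homeomorph X x) := rfl

lemma continuous_shrinkEval [CompactSpace X] : Continuous (shrinkEval.{v} (X := X)) :=
  WeakDual.continuous_of_continuous_eval fun w =>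
    w.continuous.comp (Shrink.homeomorph X).continuous

lemma exists_shrinkEval_eq (f : C(X, ℝ)) :
    ∃ w : C(Shrink.{v} X, ℝ), ∀ x, shrinkEval x w = f x :=
  ⟨f.comp (Shrink.homeomorph X).symm, fun x => by simp [shrinkEval_apply]⟩

lemma exists_forall_apply_eq_integral_shrinkEval [CompactSpace X] [MeasurableSpace X]
    [BorelSpace X] (μ : Measure X) [IsFiniteMeasure μ] :
    ∃ α : WeakDual ℝ C(Shrink.{v} X, ℝ), ∀ w, α w = ∫ x, shrinkEval x w ∂μ := by
  let pullback := ContinuousMap.compCLM ℝ ℝ (Shrink.homeomorph.{v} X : C(X, Shrink.{v} X))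
  refine ⟨StrongDual.toWeakDual
    ((L1.integralCLM.comp (ContinuousMap.toLp 1 μ ℝ)).comp pullback), fun w => ?_⟩
  calc L1.integralCLM (ContinuousMap.toLp 1 μ ℝ (pullback w))
      = ∫ x, ContinuousMap.toLp 1 μ ℝ (pullback w) x ∂μ := by
        rw [← L1.integral_eq, L1.integral_eq_integral]
    _ = ∫ x, shrinkEval x w ∂μ := integral_congr_ae (ContinuousMap.coeFn_toLp μ (pullback w))

end ContinuousFunctions

universe u v

theorem saturated_iff_variational_principle_general {X : Type u} [MetricSpace X] [CompactSpace X]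
    [MeasurableSpace X] [BorelSpace X] (T : X → X) (hT : Continuous T) :
    [Saturated T,
      ∀ (B : Type v) (_ : AddCommMonoid B) (_ : Module ℝ B) (_ : TopologicalSpace B)
        (Φ : X → WeakDual ℝ B), Continuous Φ → ∀ (α : WeakDual ℝ B) (E : Set B),
        bowenEntropy T (sublevelPoints T Φ α E) =
          ⨆ μ ∈ sublevelMeasures T Φ α E, ksEntropy T μ,
      ∀ (B : Type v) (_ : NormedAddCommGroup B) (_ : NormedSpace ℝ B) (_ : CompleteSpace B)
        (Φ : X → WeakDual ℝ B), Continuous Φ → ∀ (α : WeakDual ℝ B) (E : Set B),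
        (sublevelMeasures T Φ α E).Nonempty →
        bowenEntropy T (sublevelPoints T Φ α E) =
          ⨆ μ ∈ sublevelMeasures T Φ α E, ksEntropy T μ].TFAE := by
  tfae_have 1 → 2 := fun h B _ _ _ Φ hΦ α E => h.bowenEntropy_sublevelPoints hT hΦ α E
  tfae_have 2 → 3 := fun h B _ _ _ Φ hΦ α E _ => h B _ _ _ Φ hΦ α E
  tfae_have 3 → 1 := fun h μ hμ hμT => by
    have : Small.{v} X := small_of_secondCountableTopology
    obtain ⟨α, hα⟩ := exists_forall_apply_eq_integral_shrinkEval.{v} μ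
    have hM := sublevelMeasures_univ_eq_singleton hμT exists_shrinkEval_eq hα
    have : CompactSpace (Shrink.{v} X) := (Shrink.homeomorph X).compactSpace
    have hvp := h C(Shrink.{v} X, ℝ) inferInstance inferInstance inferInstance shrinkEval
      continuous_shrinkEval α univ (hM ▸ singleton_nonempty μ)
    rwa [hM, iSup_singleton, sublevelPoints_univ_eq_setOf_isGeneric continuous_shrinkEval
      exists_shrinkEval_eq hα] at hvp
  tfae_finish

/-- **Theorem 4.2.** A compact dynamical system is saturated if and only if the variational
principle holds for all real Banach spaces `B`: whenever `Φ : X → B*` is weak-star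
continuous, `α ∈ B*`, `E ⊆ B` and `M_Φ(α;E) ≠ ∅`, one has
`h_top(X_Φ(α;E)) = sup { h_μ : μ ∈ M_Φ(α;E) }`. -/
theorem saturated_iff_variational_principle {X : Type*} [MetricSpace X] [CompactSpace X]
    [MeasurableSpace X] [BorelSpace X] (T : X → X) (hT : Continuous T) :
    Saturated T ↔
      ∀ (B : Type) (_ : NormedAddCommGroup B), ∀ (_ : NormedSpace ℝ B) (_ : CompleteSpace B)
        (Φ : X → WeakDual ℝ B), Continuous Φ →
        ∀ (α : WeakDual ℝ B) (E : Set B),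
          {μ : Measure X | IsProbabilityMeasure μ ∧ MeasurePreserving T μ μ ∧
            ∀ w ∈ E, (∫ x, Φ x w ∂μ) ≤ α w}.Nonempty →
          bowenEntropy T {x : X | ∀ w ∈ E,
              Filter.limsup (fun n : ℕ =>
                (((n : ℝ)⁻¹ • ∑ j ∈ Finset.range n, Φ (T^[j] x)) : WeakDual ℝ B) w)
                Filter.atTop ≤ α w} =
            ⨆ μ ∈ {μ : Measure X | IsProbabilityMeasure μ ∧ MeasurePreserving T μ μ ∧
              ∀ w ∈ E, (∫ x, Φ x w ∂μ) ≤ α w}, ksEntropy T μ :=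
  (saturated_iff_variational_principle_general T hT).out 0 2
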